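/- Let $1 < p < \infty$, let $\mathcal{S}$ be a sparse family of dyadic cubes contained in a cube $R$, and let $w \in A_p$ with $\sigma = w^{1-p'}$. Then the dual testing constant for the sparse operator satisfies $\int_R (T^{\mathcal{S}(R)} w)^{p'} \sigma \, dx \lesssim [w]_{(A_p)^{1/(p-1)}(A_\infty^{\exp})^{1-1/(p-1)}}^{p'} \, w(R)$, where the implicit constant depends only on $p$ and dimension. -/

import Mathlib

open MeasureTheory Set
open scoped ENNReal

noncomputable section

/-- A (closed, axis-parallel, nondegenerate) cube in `ℝⁿ`. -/
def IsCube {n : ℕ} (Q : Set (Fin n → ℝ)) : Prop :=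
  ∃ (a : Fin n → ℝ) (l : ℝ), 0 < l ∧ Q = Set.Icc a (a + fun _ => l)

/-- The average `⨍_Q f` of `f` over `Q` (w.r.t. Lebesgue measure). -/
def avg {n : ℕ} (Q : Set (Fin n → ℝ)) (f : (Fin n → ℝ) → ℝ) : ℝ :=
  (volume Q).toReal⁻¹ * ∫ x in Q, f x

/-- The `A_p` quantity `A_p(w,Q) = (⨍_Q w) (⨍_Q w^{-1/(p-1)})^{p-1}`. -/
def ApQ {n : ℕ} (p : ℝ) (w : (Fin n → ℝ) → ℝ) (Q : Set (Fin n → ℝ)) : ℝ :=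
  avg Q w * (avg Q fun x => w x ^ (-(1 / (p - 1)))) ^ (p - 1)

/-- The exponential `A_∞` quantity `A_∞^exp(w,Q) = (⨍_Q w) exp(-⨍_Q log w)`. -/
def AexpQ {n : ℕ} (w : (Fin n → ℝ) → ℝ) (Q : Set (Fin n → ℝ)) : ℝ :=
  avg Q w * Real.exp (-(avg Q fun x => Real.log (w x)))

/-- A dyadic cube of generation `k` (half-open, side length `2^k`). -/
def IsDyadicCubeOf {n : ℕ} (k : ℤ) (Q : Set (Fin n → ℝ)) : Prop :=
  ∃ a : Fin n → ℝ, Q = Set.univ.pi fun i => Set.Ico (a i) (a i + (2 : ℝ) ^ k)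

/-- A dyadic grid: a collection of cubes of side lengths `2^k`, pairwise nested or
disjoint, partitioning `ℝⁿ` at each scale. -/
def IsDyadicGrid {n : ℕ} (𝒟 : Set (Set (Fin n → ℝ))) : Prop :=
  (∀ Q ∈ 𝒟, ∃ k : ℤ, IsDyadicCubeOf k Q) ∧
  (∀ Q ∈ 𝒟, ∀ P ∈ 𝒟, Q ⊆ P ∨ P ⊆ Q ∨ Disjoint Q P) ∧
  (∀ k : ℤ, ⋃₀ {Q | Q ∈ 𝒟 ∧ IsDyadicCubeOf k Q} = Set.univ ∧
    Set.PairwiseDisjoint {Q | Q ∈ 𝒟 ∧ IsDyadicCubeOf k Q} id)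

/-- The union of the strict subcubes of `Q` belonging to the family `𝒮`. -/
def strictUnion {n : ℕ} (𝒮 : Set (Set (Fin n → ℝ))) (Q : Set (Fin n → ℝ)) :
    Set (Fin n → ℝ) :=
  ⋃ Q' ∈ {Q' | Q' ∈ 𝒮 ∧ Q' ⊂ Q}, Q'

/-- The "major subset" `E_Q = Q \ ⋃ {Q' ∈ 𝒮 : Q' ⊊ Q}`. -/
def Eset {n : ℕ} (𝒮 : Set (Set (Fin n → ℝ))) (Q : Set (Fin n → ℝ)) :
    Set (Fin n → ℝ) :=
  Q \ strictUnion 𝒮 Q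

/-- A sparse family: for each `Q ∈ 𝒮`, `|⋃ {Q' ∈ 𝒮 : Q' ⊊ Q}| ≤ |Q|/2`. -/
def IsSparse {n : ℕ} (𝒮 : Set (Set (Fin n → ℝ))) : Prop :=
  ∀ Q ∈ 𝒮, volume (strictUnion 𝒮 Q) ≤ volume Q / 2

/-- The sparse operator `T^𝒮 f = ∑_{Q ∈ 𝒮} (⨍_Q f) χ_Q` (with values in `ℝ≥0∞`). -/
def sparseT {n : ℕ} (𝒮 : Set (Set (Fin n → ℝ))) (f : (Fin n → ℝ) → ℝ)
    (x : Fin n → ℝ) : ℝ≥0∞ :=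
  ∑' Q : 𝒮, Set.indicator Q.1 (fun _ => ENNReal.ofReal (avg Q.1 f)) x

/-!
Put `σ = w^{1-p'}`, `u_Q = |Q| exp (⨍_Q log w)` and `v_Q = |Q| exp (⨍_Q log σ)`. The mixed constant
is tailored so that `(⨍_Q w) σ(Q) ≤ [w] u_Q^{1/p'} v_Q^{1/p}`. Pairing `T w` with `g ≥ 0` in
`L²(σ)` and applying Hölder's inequality to the sum over `Q` therefore produces `(∑ u_Q)^{1/p'}` and
`(∑ v_Q (σ-average of g over Q)^p)^{1/p}`; the choice `g = (T w)^{p'-1}` gives the theorem once the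
first sum is `≲ w(R)` and the second is `≲ ∫ g^p dσ`.

Both are instances of the Carleson embedding theorem, which holds for an arbitrary measure and a
laminar family of sets. For the first, Jensen's inequality gives `u_Q ≤ |Q| (⨍_Q √w)²`, and
sparseness is the packing condition for Lebesgue measure. For the second, the packing condition for
the measure `σ dx` with coefficients `v_Q` is the first bound applied to `σ` in place of `w`.

The embedding theorem is proved with the Bellman function `(G, V) ↦ V (G / V)^p`: it is subadditive,
so it can be localised to disjoint sets, and it decreases when `V` grows by a coefficient `c_Q`, by
enough to pay for the term of `Q` in the Carleson sum.
-/

section Perspective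

variable {p G G' V V' m S c : ℝ}

/-- The perspective `(G, V) ↦ V (G / V) ^ p` of the power `t ↦ t ^ p`, the Bellman function of the
Carleson embedding theorem: `G` is the integral of a function over a set and `V` is a mass. By the
convention `G / 0 = 0` it vanishes at `V = 0`. -/
def rpowPerspective (p G V : ℝ) : ℝ := V * (G / V) ^ p

lemma rpowPerspective_nonneg (hG : 0 ≤ G) (hV : 0 ≤ V) : 0 ≤ rpowPerspective p G V := by
  unfold rpowPerspective
  positivity

lemma rpowPerspective_add_le (hp : 1 ≤ p) (hG : 0 ≤ G) (hG' : 0 ≤ G') (hV : 0 ≤ V) (hV' : 0 ≤ V')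
    (hVG : V = 0 → G = 0) (hVG' : V' = 0 → G' = 0) :
    rpowPerspective p (G + G') (V + V') ≤ rpowPerspective p G V + rpowPerspective p G' V' := by
  unfold rpowPerspective
  rcases hV.eq_or_lt' with rfl | hV
  · simp [hVG rfl]
  rcases hV'.eq_or_lt' with rfl | hV'
  · simp [hVG' rfl]
  have hmean : V / (V + V') * (G / V) + V' / (V + V') * (G' / V') = (G + G') / (V + V') := by
    field_simp
  have hconv := (convexOn_rpow hp).2 (mem_Ici.2 (div_nonneg hG hV.le))
    (mem_Ici.2 (div_nonneg hG' hV'.le)) (show 0 ≤ V / (V + V') by positivity)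
    (show 0 ≤ V' / (V + V') by positivity) (by field_simp)
  simp only [smul_eq_mul, hmean] at hconv
  calc (V + V') * ((G + G') / (V + V')) ^ p
      ≤ (V + V') * (V / (V + V') * (G / V) ^ p + V' / (V + V') * (G' / V') ^ p) := by gcongr
    _ = V * (G / V) ^ p + V' * (G' / V') ^ p := by field_simp

lemma rpowPerspective_add_right_le (hp : 1 ≤ p) (hG : 0 ≤ G) (hc : 0 ≤ c) (hm : 0 ≤ m)
    (hmV : m ≤ V) (hVc : V + c ≤ 2 * m) :
    (p - 1) / 2 ^ p * (c * (G / m) ^ p) + rpowPerspective p G (V + c) ≤ rpowPerspective p G V := by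
  rcases hm.eq_or_lt' with rfl | hm
  · obtain rfl : c = 0 := by linarith
    simp
  have hV : 0 < V := hm.trans_le hmV
  have := sub_nonneg.2 hp
  set x := G / (V + c) with hx
  have hhalf : (G / m) / 2 ≤ x := by
    rw [hx, div_div]
    gcongr
    linarith
  have hGV : G / V = x * (1 + c / V) := by
    rw [hx]
    field_simp
  have hbernoulli : 1 + p * (c / V) ≤ (1 + c / V) ^ p :=
    one_add_mul_self_le_rpow_one_add (by linarith [div_nonneg hc hV.le]) hp
  calc (p - 1) / 2 ^ p * (c * (G / m) ^ p) + (V + c) * x ^ p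
      = (p - 1) * c * ((G / m) / 2) ^ p + (V + c) * x ^ p := by
        rw [Real.div_rpow (by positivity) zero_le_two]
        ring
    _ ≤ (p - 1) * c * x ^ p + (V + c) * x ^ p := by gcongr
    _ = V * (x ^ p * (1 + p * (c / V))) := by
        field_simp
        ring
    _ ≤ V * (x ^ p * (1 + c / V) ^ p) := by gcongr
    _ = V * (G / V) ^ p := by rw [hGV, Real.mul_rpow (by positivity) (by positivity)]

lemma rpowPerspective_add_add_le (hp : 1 ≤ p) (hG : 0 ≤ G) (hG' : 0 ≤ G') (hm : 0 ≤ m)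
    (hV' : 0 ≤ V') (hS : 0 ≤ S) (hc : 0 ≤ c) (hcS : c + S ≤ m)
    (hmG : m = 0 → G = 0) (hVG' : V' = 0 → G' = 0) :
    (p - 1) / 2 ^ p * (c * (G / m) ^ p) + rpowPerspective p (G + G') (m + S + c + V') ≤
      rpowPerspective p G (m + S) + rpowPerspective p G' V' := by
  have hgain := rpowPerspective_add_right_le (V := m + S) hp hG hc hm (by linarith) (by linarith)
  have hadd := rpowPerspective_add_le (V := m + S + c) hp hG hG' (by linarith) hV'
    (fun h => hmG (by linarith)) hVG'
  linarith

end Perspective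

section CarlesonEmbedding

variable {α : Type*} {𝒮 : Set (Set α)}

/-- A laminar family of sets: any two members are nested or disjoint. Dyadic cubes are the main
example. -/
def IsLaminar (𝒮 : Set (Set α)) : Prop :=
  ∀ Q ∈ 𝒮, ∀ P ∈ 𝒮, Q ⊆ P ∨ P ⊆ Q ∨ Disjoint Q P

lemma IsLaminar.mono {𝒯 : Set (Set α)} (h : IsLaminar 𝒮) (h𝒯 : 𝒯 ⊆ 𝒮) : IsLaminar 𝒯 :=
  fun Q hQ P hP => h Q (h𝒯 hQ) P (h𝒯 hP)

lemma IsLaminar.exists_forall_subset_or_disjoint {F : Finset (Set α)}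
    (hF : IsLaminar (F : Set (Set α))) (hne : F.Nonempty) :
    ∃ P ∈ F, ∀ Q ∈ F, Q ⊆ P ∨ Disjoint Q P := by
  obtain ⟨P, hP⟩ := F.exists_maximal hne
  refine ⟨P, hP.prop, fun Q hQ => ?_⟩
  rcases hF Q hQ P hP.prop with h | h | h
  exacts [.inl h, .inl (hP.2 hQ h), .inr h]

lemma IsLaminar.induction_on (h𝒮 : IsLaminar 𝒮) {motive : Finset (Set α) → Set α → Prop}
    (empty : ∀ U, motive ∅ U)
    (cons : ∀ (P U : Set α) (inner outer : Finset (Set α)) (hd : Disjoint inner outer)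
      (hP : P ∉ inner.disjUnion outer hd), P ∈ 𝒮 → P ⊆ U → (∀ Q ∈ inner, Q ∈ 𝒮 ∧ Q ⊆ P) →
      motive inner P → motive outer (U \ P) → motive ((inner.disjUnion outer hd).cons P hP) U)
    (F : Finset (Set α)) (U : Set α) (hF : ∀ Q ∈ F, Q ∈ 𝒮 ∧ Q ⊆ U) : motive F U := by
  classical
  induction F using Finset.strongInduction generalizing U with
  | H F ih =>
  rcases F.eq_empty_or_nonempty with rfl | hne
  · exact empty U
  obtain ⟨P, hPF, hP⟩ := (h𝒮.mono fun Q hQ => (hF Q hQ).1).exists_forall_subset_or_disjoint hne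
  obtain ⟨hP𝒮, hPU⟩ := hF P hPF
  set inner := (F.erase P).filter (· ⊆ P)
  set outer := (F.erase P).filter (¬ · ⊆ P)
  have hinner : ∀ Q ∈ inner, Q ∈ 𝒮 ∧ Q ⊆ P := by grind
  have houter : ∀ Q ∈ outer, Q ∈ 𝒮 ∧ Q ⊆ U \ P := by grind [subset_sdiff]
  have hd : Disjoint inner outer := Finset.disjoint_filter_filter_not _ _ _
  have hunion : inner.disjUnion outer hd = F.erase P := by
    rw [Finset.disjUnion_eq_union, Finset.filter_union_filter_not_eq]
  have hcons : (inner.disjUnion outer hd).cons P (hunion ▸ Finset.notMem_erase P F) = F := by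
    simp only [hunion, Finset.cons_eq_insert, Finset.insert_erase hPF]
  rw [← hcons]
  exact cons P U inner outer hd _ hP𝒮 hPU hinner (ih inner (by grind) P hinner)
    (ih outer (by grind) (U \ P) houter)

variable [MeasurableSpace α] {μ : Measure α} {A : ℝ} {c : Set α → ℝ}

/-- The Carleson packing condition with constant `A`: the coefficients attached to the members of
`𝒮` inside any `P ∈ 𝒮` add up to at most `A μ(P)`. The sum is bounded through its finite
subsums, so that `𝒮` may be infinite. -/
def IsCarleson (μ : Measure α) (A : ℝ) (𝒮 : Set (Set α)) (c : Set α → ℝ) : Prop :=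
  ∀ P ∈ 𝒮, ∀ F : Finset (Set α), (∀ Q ∈ F, Q ∈ 𝒮 ∧ Q ⊆ P) → ∑ Q ∈ F, c Q ≤ A * μ.real P

lemma IsCarleson.mono {𝒯 : Set (Set α)} (h : IsCarleson μ A 𝒮 c) (h𝒯 : 𝒯 ⊆ 𝒮) :
    IsCarleson μ A 𝒯 c :=
  fun P hP F hF => h P (h𝒯 hP) F fun Q hQ => ⟨h𝒯 (hF Q hQ).1, (hF Q hQ).2⟩

lemma IsCarleson.div_const (h : IsCarleson μ A 𝒮 c) (hA : 0 < A) :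
    IsCarleson μ 1 𝒮 fun Q => c Q / A := by
  intro P hP F hF
  rw [← Finset.sum_div, one_mul, div_le_iff₀' hA]
  exact h P hP F hF

lemma isCarleson_of_pairwiseDisjoint (hfin : ∀ Q ∈ 𝒮, μ Q ≠ ∞) {E : Set α → Set α}
    (hE : 𝒮.PairwiseDisjoint E) (hEm : ∀ Q ∈ 𝒮, MeasurableSet (E Q)) (hEQ : ∀ Q ∈ 𝒮, E Q ⊆ Q)
    (hA : 0 ≤ A) (hμ : ∀ Q ∈ 𝒮, μ.real Q ≤ A * μ.real (E Q)) : IsCarleson μ A 𝒮 μ.real := by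
  intro P hP F hF
  calc ∑ Q ∈ F, μ.real Q ≤ ∑ Q ∈ F, A * μ.real (E Q) :=
        Finset.sum_le_sum fun Q hQ => hμ Q (hF Q hQ).1
    _ = A * μ.real (⋃ Q ∈ F, E Q) := by
        rw [← Finset.mul_sum, measureReal_biUnion_finset (hE.subset fun Q hQ => (hF Q hQ).1)
          (fun Q hQ => hEm Q (hF Q hQ).1) fun Q hQ =>
            measure_ne_top_of_subset (hEQ Q (hF Q hQ).1) (hfin Q (hF Q hQ).1)]
    _ ≤ A * μ.real P := by
        gcongr
        · exact hfin P hP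
        · exact iUnion₂_subset fun Q hQ => (hEQ Q (hF Q hQ).1).trans (hF Q hQ).2

variable {p : ℝ} {g : α → ℝ}

lemma measureReal_mul_setAverage_rpow_le (hp : 1 ≤ p) (hg : ∀ x, 0 ≤ g x) {U : Set α}
    (hU : μ U ≠ ∞) (hgi : IntegrableOn g U μ) (hgp : IntegrableOn (fun x => g x ^ p) U μ) :
    μ.real U * (⨍ x in U, g x ∂μ) ^ p ≤ ∫ x in U, g x ^ p ∂μ := by
  rcases eq_or_ne (μ U) 0 with hU0 | hU0
  · simp [measureReal_def, hU0, setIntegral_measure_zero]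
  rw [← measure_smul_setAverage _ hU, smul_eq_mul]
  gcongr
  exact (convexOn_rpow hp).map_set_average_le
    (Real.continuous_rpow_const (by linarith)).continuousOn isClosed_Ici hU0 hU
    (ae_of_all _ hg) hgi hgp

lemma setIntegral_eq_inter_add_sdiff {U P : Set α} (hP : MeasurableSet P) (hPU : P ⊆ U)
    {f : α → ℝ} (hf : IntegrableOn f U μ) :
    ∫ x in U, f x ∂μ = ∫ x in P, f x ∂μ + ∫ x in U \ P, f x ∂μ := by
  rw [← integral_inter_add_sdiff hP hf, inter_eq_self_of_subset_right hPU]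

/-- The quantity controlled along the induction in the Carleson embedding theorem: the Carleson sum
over `F`, plus the Bellman function at the integral of `g` over `U` and at the mass of `U` enlarged
by the coefficients of `F`. -/
def carlesonBellman (μ : Measure α) (p : ℝ) (c : Set α → ℝ) (g : α → ℝ) (F : Finset (Set α))
    (U : Set α) : ℝ :=
  (p - 1) / 2 ^ p * ∑ Q ∈ F, c Q * (⨍ x in Q, g x ∂μ) ^ p +
    rpowPerspective p (∫ x in U, g x ∂μ) (μ.real U + ∑ Q ∈ F, c Q)

lemma carlesonBellman_empty_le (hp : 1 ≤ p) (hg : ∀ x, 0 ≤ g x) {U : Set α} (hU : μ U ≠ ∞)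
    (hgi : IntegrableOn g U μ) (hgp : IntegrableOn (fun x => g x ^ p) U μ) :
    carlesonBellman μ p c g ∅ U ≤ ∫ x in U, g x ^ p ∂μ := by
  simpa [carlesonBellman, rpowPerspective, setAverage_eq, div_eq_inv_mul] using
    measureReal_mul_setAverage_rpow_le hp hg hU hgi hgp

lemma carlesonBellman_cons_le (hp : 1 ≤ p) (hc : ∀ Q, 0 ≤ c Q) (hg : ∀ x, 0 ≤ g x)
    {P U : Set α} (hPm : MeasurableSet P) (hPU : P ⊆ U) (hU : μ U ≠ ∞) (hgi : IntegrableOn g U μ)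
    {inner outer : Finset (Set α)} (hd : Disjoint inner outer)
    (hP : P ∉ inner.disjUnion outer hd) (hmass : c P + ∑ Q ∈ inner, c Q ≤ μ.real P) :
    carlesonBellman μ p c g ((inner.disjUnion outer hd).cons P hP) U ≤
      carlesonBellman μ p c g inner P + carlesonBellman μ p c g outer (U \ P) := by
  have hUP : U \ P ⊆ U := sdiff_subset
  have hnonneg (G : Finset (Set α)) : 0 ≤ ∑ Q ∈ G, c Q := Finset.sum_nonneg fun Q _ => hc Q
  have hnull {V : Set α} (hV : μ V ≠ ∞) {b : ℝ} (hb : 0 ≤ b) (h0 : μ.real V + b = 0) :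
      ∫ x in V, g x ∂μ = 0 :=
    setIntegral_measure_zero g ((measureReal_eq_zero_iff hV).1 (by
      linarith [measureReal_nonneg (μ := μ) (s := V)]))
  have hglue := rpowPerspective_add_add_le hp (integral_nonneg hg) (integral_nonneg hg)
    measureReal_nonneg (add_nonneg measureReal_nonneg (hnonneg outer)) (hnonneg inner) (hc P) hmass
    (fun h => hnull (measure_ne_top_of_subset hPU hU) le_rfl (by linarith))
    (hnull (measure_ne_top_of_subset hUP hU) (hnonneg outer))
  have hμU : μ.real U = μ.real P + μ.real (U \ P) := by
    rw [← measureReal_inter_add_sdiff hPm hU, inter_eq_self_of_subset_right hPU]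
  have havg : ⨍ x in P, g x ∂μ = (∫ x in P, g x ∂μ) / μ.real P := by
    rw [setAverage_eq, smul_eq_mul, inv_mul_eq_div]
  have hmassU : μ.real P + μ.real (U \ P) + (c P + (∑ Q ∈ inner, c Q + ∑ Q ∈ outer, c Q)) =
      μ.real P + ∑ Q ∈ inner, c Q + c P + (μ.real (U \ P) + ∑ Q ∈ outer, c Q) := by
    ring
  unfold carlesonBellman
  rw [Finset.sum_cons, Finset.sum_disjUnion, Finset.sum_cons, Finset.sum_disjUnion, hμU,
    setIntegral_eq_inter_add_sdiff hPm hPU hgi, havg, hmassU]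
  linarith

lemma IsCarleson.carlesonBellman_le (hcar : IsCarleson μ 1 𝒮 c) (h𝒮 : IsLaminar 𝒮)
    (hmeas : ∀ Q ∈ 𝒮, MeasurableSet Q) (hc : ∀ Q, 0 ≤ c Q) (hp : 1 ≤ p) (hg : ∀ x, 0 ≤ g x)
    {F : Finset (Set α)} {U : Set α} (hF : ∀ Q ∈ F, Q ∈ 𝒮 ∧ Q ⊆ U) (hU : μ U ≠ ∞)
    (hgi : IntegrableOn g U μ) (hgp : IntegrableOn (fun x => g x ^ p) U μ) :
    carlesonBellman μ p c g F U ≤ ∫ x in U, g x ^ p ∂μ := by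
  refine h𝒮.induction_on (motive := fun F U => μ U ≠ ∞ → IntegrableOn g U μ →
    IntegrableOn (fun x => g x ^ p) U μ → carlesonBellman μ p c g F U ≤ ∫ x in U, g x ^ p ∂μ)
    (fun U => carlesonBellman_empty_le hp hg)
    (fun P U inner outer hd hP hP𝒮 hPU hinner hin hout hU hgi hgp => ?_) F U hF hU hgi hgp
  have hUP : U \ P ⊆ U := sdiff_subset
  have hmass : c P + ∑ Q ∈ inner, c Q ≤ μ.real P := by
    rw [← Finset.sum_cons fun h => hP (Finset.mem_disjUnion.2 (.inl h)), ← one_mul (μ.real P)]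
    refine hcar P hP𝒮 _ fun Q hQ => ?_
    rcases Finset.mem_cons.1 hQ with rfl | hQ
    exacts [⟨hP𝒮, Subset.rfl⟩, hinner Q hQ]
  calc carlesonBellman μ p c g ((inner.disjUnion outer hd).cons P hP) U
      ≤ carlesonBellman μ p c g inner P + carlesonBellman μ p c g outer (U \ P) :=
        carlesonBellman_cons_le hp hc hg (hmeas P hP𝒮) hPU hU hgi hd hP hmass
    _ ≤ ∫ x in P, g x ^ p ∂μ + ∫ x in U \ P, g x ^ p ∂μ :=
        add_le_add
          (hin (measure_ne_top_of_subset hPU hU) (hgi.mono_set hPU) (hgp.mono_set hPU))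
          (hout (measure_ne_top_of_subset hUP hU) (hgi.mono_set hUP) (hgp.mono_set hUP))
    _ = ∫ x in U, g x ^ p ∂μ := (setIntegral_eq_inter_add_sdiff (hmeas P hP𝒮) hPU hgp).symm

theorem IsCarleson.sum_mul_setAverage_rpow_le (hcar : IsCarleson μ A 𝒮 c) (hA : 0 < A)
    (h𝒮 : IsLaminar 𝒮) (hmeas : ∀ Q ∈ 𝒮, MeasurableSet Q) (hc : ∀ Q, 0 ≤ c Q) (hp : 1 < p)
    (hg : ∀ x, 0 ≤ g x) {F : Finset (Set α)} {U : Set α} (hF : ∀ Q ∈ F, Q ∈ 𝒮 ∧ Q ⊆ U)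
    (hfin : ∀ Q ∈ F, μ Q ≠ ∞) (hgi : ∀ Q ∈ F, IntegrableOn g Q μ)
    (hgp : IntegrableOn (fun x => g x ^ p) U μ) :
    ∑ Q ∈ F, c Q * (⨍ x in Q, g x ∂μ) ^ p ≤ A * (2 ^ p / (p - 1)) * ∫ x in U, g x ^ p ∂μ := by
  have hp' : 0 < p - 1 := by linarith
  set V := ⋃ Q ∈ F, Q
  have hVU : V ⊆ U := iUnion₂_subset fun Q hQ => (hF Q hQ).2
  have hbellman : carlesonBellman μ p (fun Q => c Q / A) g F V ≤ ∫ x in V, g x ^ p ∂μ :=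
    (hcar.div_const hA).carlesonBellman_le h𝒮 hmeas (fun Q => div_nonneg (hc Q) hA.le) hp.le hg
      (fun Q hQ => ⟨(hF Q hQ).1, subset_biUnion_of_mem (u := fun Q => Q) hQ⟩)
      (measure_biUnion_ne_top F.finite_toSet hfin)
      (integrableOn_finset_iUnion.2 hgi) (hgp.mono_set hVU)
  have hmono : ∫ x in V, g x ^ p ∂μ ≤ ∫ x in U, g x ^ p ∂μ :=
    setIntegral_mono_set hgp (ae_of_all _ fun x => by have := hg x; positivity)
      (LE.le.eventuallyLE hVU)
  have hrest : 0 ≤ rpowPerspective p (∫ x in V, g x ∂μ) (μ.real V + ∑ Q ∈ F, c Q / A) :=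
    rpowPerspective_nonneg (integral_nonneg hg)
      (add_nonneg measureReal_nonneg (Finset.sum_nonneg fun Q _ => div_nonneg (hc Q) hA.le))
  have hsum : ∑ Q ∈ F, c Q / A * (⨍ x in Q, g x ∂μ) ^ p =
      (∑ Q ∈ F, c Q * (⨍ x in Q, g x ∂μ) ^ p) / A := by
    rw [Finset.sum_div]
    exact Finset.sum_congr rfl fun Q _ => by ring
  rw [carlesonBellman, hsum] at hbellman
  calc ∑ Q ∈ F, c Q * (⨍ x in Q, g x ∂μ) ^ p
      = A * (2 ^ p / (p - 1)) *
          ((p - 1) / 2 ^ p * ((∑ Q ∈ F, c Q * (⨍ x in Q, g x ∂μ) ^ p) / A)) := by field_simp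
    _ ≤ A * (2 ^ p / (p - 1)) * ∫ x in U, g x ^ p ∂μ := by
        gcongr
        linarith

end CarlesonEmbedding

section GeomMean

variable {α : Type*} [MeasurableSpace α] {μ : Measure α} {Q : Set α} {f : α → ℝ} {r : ℝ}

/-- The geometric mean `exp (⨍_Q log f)` of a positive function over a set. -/
def geomMean (μ : Measure α) (Q : Set α) (f : α → ℝ) : ℝ := Real.exp (⨍ x in Q, Real.log (f x) ∂μ)

lemma geomMean_pos : 0 < geomMean μ Q f := Real.exp_pos _

lemma geomMean_rpow (hf : ∀ x, 0 < f x) (r : ℝ) :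
    geomMean μ Q (fun x => f x ^ r) = geomMean μ Q f ^ r := by
  simp only [geomMean, Real.log_rpow (hf _), ← Real.exp_mul, setAverage_eq, smul_eq_mul,
    integral_const_mul]
  ring_nf

lemma geomMean_le_setAverage (hf : ∀ x, 0 < f x) (h0 : μ Q ≠ 0) (h1 : μ Q ≠ ∞)
    (hfi : IntegrableOn f Q μ) (hlog : IntegrableOn (fun x => Real.log (f x)) Q μ) :
    geomMean μ Q f ≤ ⨍ x in Q, f x ∂μ := by
  have hexp : (fun x => Real.exp (Real.log (f x))) = f := funext fun x => Real.exp_log (hf x)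
  calc geomMean μ Q f ≤ ⨍ x in Q, Real.exp (Real.log (f x)) ∂μ :=
        convexOn_exp.map_set_average_le Real.continuous_exp.continuousOn isClosed_univ h0 h1
          (ae_of_all _ fun _ => mem_univ _) hlog (by rwa [Function.comp_def, hexp])
    _ = ⨍ x in Q, f x ∂μ := by rw [hexp]

lemma integrableOn_log_of_integrableOn_rpow_neg (hf : ∀ x, 0 < f x) (hr : 0 < r)
    (hfi : IntegrableOn f Q μ) (hfr : IntegrableOn (fun x => f x ^ (-r)) Q μ) :
    IntegrableOn (fun x => Real.log (f x)) Q μ := by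
  refine (hfi.add (hfr.const_mul r⁻¹)).mono' hfi.aemeasurable.log.aestronglyMeasurable
    (ae_of_all _ fun x => ?_)
  have hupper : Real.log (f x) ≤ f x := Real.log_le_self (hf x).le
  have hlower : r * -Real.log (f x) ≤ f x ^ (-r) := by
    rw [mul_neg, ← neg_mul, ← Real.log_rpow (hf x)]
    exact Real.log_le_self (Real.rpow_nonneg (hf x).le _)
  have hlower' : -Real.log (f x) ≤ r⁻¹ * f x ^ (-r) := by rwa [le_inv_mul_iff₀ hr]
  have h1 := hf x
  have h2 : 0 ≤ r⁻¹ * f x ^ (-r) := by positivity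
  rw [Real.norm_eq_abs, Pi.add_apply]
  exact abs_le.2 ⟨by linarith, by linarith⟩

lemma integrableOn_rpow_of_le_one (hf : ∀ x, 0 ≤ f x) (hr0 : 0 ≤ r) (hr1 : r ≤ 1) (hQ : μ Q ≠ ∞)
    (hfi : IntegrableOn f Q μ) : IntegrableOn (fun x => f x ^ r) Q μ := by
  refine ((integrableOn_const hQ (C := (1 : ℝ))).add hfi).mono'
    (hfi.aemeasurable.pow_const r).aestronglyMeasurable (ae_of_all _ fun x => ?_)
  have h1 := hf x
  rw [Real.norm_of_nonneg (by positivity)]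
  calc f x ^ r ≤ (1 + f x) ^ r := by gcongr; linarith
    _ ≤ (1 + f x) ^ (1 : ℝ) := Real.rpow_le_rpow_of_exponent_le (by linarith) hr1
    _ = 1 + f x := Real.rpow_one _

theorem IsCarleson.sum_measureReal_mul_geomMean_le {A : ℝ} {𝒮 : Set (Set α)}
    (hcar : IsCarleson μ A 𝒮 μ.real) (hA : 0 < A) (h𝒮 : IsLaminar 𝒮)
    (hmeas : ∀ Q ∈ 𝒮, MeasurableSet Q) (hf : ∀ x, 0 < f x) {F : Finset (Set α)} {U : Set α}
    (hF : ∀ Q ∈ F, Q ∈ 𝒮 ∧ Q ⊆ U) (hfin : ∀ Q ∈ F, μ Q ≠ ∞) (hfi : IntegrableOn f U μ)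
    (hlog : ∀ Q ∈ F, IntegrableOn (fun x => Real.log (f x)) Q μ) :
    ∑ Q ∈ F, μ.real Q * geomMean μ Q f ≤ 4 * A * ∫ x in U, f x ∂μ := by
  set g : α → ℝ := fun x => f x ^ (1 / 2 : ℝ) with hg_def
  have hg (x : α) : 0 < g x := Real.rpow_pos_of_pos (hf x) _
  have hg2 : (fun x => g x ^ (2 : ℝ)) = f := by
    ext x
    rw [← Real.rpow_mul (hf x).le, one_div_mul_cancel two_ne_zero, Real.rpow_one]
  have hgi (Q) (hQ : Q ∈ F) : IntegrableOn g Q μ :=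
    integrableOn_rpow_of_le_one (fun x => (hf x).le) (by norm_num) (by norm_num) (hfin Q hQ)
      (hfi.mono_set (hF Q hQ).2)
  -- Jensen's inequality for `g = √f`, which unlike `f` leaves room for the embedding exponent `2`.
  have hmean (Q) (hQ : Q ∈ F) :
      μ.real Q * geomMean μ Q f ≤ μ.real Q * (⨍ x in Q, g x ∂μ) ^ (2 : ℝ) := by
    rcases eq_or_ne (μ Q) 0 with h0 | h0
    · simp [measureReal_def, h0]
    rw [← hg2, geomMean_rpow hg]
    have hlogg : IntegrableOn (fun x => Real.log (g x)) Q μ := by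
      simp only [hg_def, Real.log_rpow (hf _)]
      exact (hlog Q hQ).const_mul _
    gcongr
    · exact geomMean_pos.le
    · exact geomMean_le_setAverage hg h0 (hfin Q hQ) (hgi Q hQ) hlogg
  calc ∑ Q ∈ F, μ.real Q * geomMean μ Q f
      ≤ ∑ Q ∈ F, μ.real Q * (⨍ x in Q, g x ∂μ) ^ (2 : ℝ) := Finset.sum_le_sum hmean
    _ ≤ A * (2 ^ (2 : ℝ) / (2 - 1)) * ∫ x in U, g x ^ (2 : ℝ) ∂μ :=
        hcar.sum_mul_setAverage_rpow_le hA h𝒮 hmeas (fun _ => measureReal_nonneg) one_lt_two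
          (fun x => (hg x).le) hF hfin hgi (hg2 ▸ hfi)
    _ = 4 * A * ∫ x in U, f x ∂μ := by
        rw [hg2, Real.rpow_two]
        ring

end GeomMean

section Testing

variable {p q : ℝ}

lemma sum_rpow_inv_mul_rpow_inv_mul_le (hpq : p.HolderConjugate q) {ι : Type*} (s : Finset ι)
    {u v X : ι → ℝ} (hu : ∀ i ∈ s, 0 ≤ u i) (hv : ∀ i ∈ s, 0 ≤ v i) (hX : ∀ i ∈ s, 0 ≤ X i) :
    ∑ i ∈ s, u i ^ q⁻¹ * v i ^ p⁻¹ * X i ≤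
      (∑ i ∈ s, u i) ^ q⁻¹ * (∑ i ∈ s, v i * X i ^ p) ^ p⁻¹ := by
  have hp := hpq.ne_zero
  have hq := hpq.symm.ne_zero
  have hholder := Real.inner_le_Lp_mul_Lq_of_nonneg s hpq.symm (f := fun i => u i ^ q⁻¹)
    (g := fun i => v i ^ p⁻¹ * X i) (fun i hi => Real.rpow_nonneg (hu i hi) _)
    (fun i hi => mul_nonneg (Real.rpow_nonneg (hv i hi) _) (hX i hi))
  have hupow : ∑ i ∈ s, (u i ^ q⁻¹) ^ q = ∑ i ∈ s, u i :=
    Finset.sum_congr rfl fun i hi => Real.rpow_inv_rpow (hu i hi) hq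
  have hvpow : ∑ i ∈ s, (v i ^ p⁻¹ * X i) ^ p = ∑ i ∈ s, v i * X i ^ p :=
    Finset.sum_congr rfl fun i hi => by
      rw [Real.mul_rpow (Real.rpow_nonneg (hv i hi) _) (hX i hi), Real.rpow_inv_rpow (hv i hi) hp]
  simpa only [hupow, hvpow, one_div, mul_assoc] using hholder

lemma le_of_le_mul_rpow_inv_mul_rpow_inv (hpq : p.HolderConjugate q) {I K a b : ℝ} (hI : 0 ≤ I)
    (hK : 0 ≤ K) (ha : 0 ≤ a) (hb : 0 ≤ b) (h : I ≤ K * (a ^ q⁻¹ * (b * I) ^ p⁻¹)) :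
    I ≤ b ^ (q - 1) * K ^ q * a := by
  rcases hI.eq_or_lt' with rfl | hI
  · positivity
  have hq := hpq.symm.pos
  have hexp : p⁻¹ * q = q - 1 := by
    rw [← hpq.symm.div_conj_eq_sub_one]
    ring
  have hIq : I ^ q = I ^ (q - 1) * I := by
    rw [Real.rpow_sub_one hI.ne', div_mul_cancel₀ _ hI.ne']
  have hpow : I ^ q ≤ K ^ q * (a * (b ^ (q - 1) * I ^ (q - 1))) := by
    calc I ^ q ≤ (K * (a ^ q⁻¹ * (b * I) ^ p⁻¹)) ^ q := by gcongr
      _ = K ^ q * (a * (b ^ (q - 1) * I ^ (q - 1))) := by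
          rw [Real.mul_rpow hK (by positivity), Real.mul_rpow (by positivity) (by positivity),
            Real.rpow_inv_rpow ha hq.ne', ← Real.rpow_mul (by positivity), hexp,
            Real.mul_rpow hb hI.le]
  refine le_of_mul_le_mul_left ?_ (Real.rpow_pos_of_pos hI (q - 1))
  linarith

variable {α : Type*} [MeasurableSpace α] {μ : Measure α} {a : Set α → ℝ} {F : Finset (Set α)}

lemma integral_sum_indicator_mul (hmeas : ∀ Q ∈ F, MeasurableSet Q) {g : α → ℝ}
    (hg : ∀ Q ∈ F, IntegrableOn g Q μ) :
    ∫ x, (∑ Q ∈ F, Q.indicator (fun _ => a Q) x) * g x ∂μ =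
      ∑ Q ∈ F, a Q * ∫ x in Q, g x ∂μ := by
  have hind (Q : Set α) (x : α) :
      Q.indicator (fun _ => a Q) x * g x = Q.indicator (fun x => a Q * g x) x := by
    simp only [indicator_mul_left]
  simp only [Finset.sum_mul, hind]
  rw [integral_finsetSum]
  · exact Finset.sum_congr rfl fun Q hQ => by
      rw [integral_indicator (hmeas Q hQ), integral_const_mul]
  · exact fun Q hQ => (integrable_indicator_iff (hmeas Q hQ)).2 ((hg Q hQ).const_mul _)

lemma integrable_sum_indicator_rpow (hmeas : ∀ Q ∈ F, MeasurableSet Q)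
    (hfin : ∀ Q ∈ F, μ Q ≠ ∞) (ha : ∀ Q, 0 ≤ a Q) {r : ℝ} (hr : 0 < r) :
    Integrable (fun x => (∑ Q ∈ F, Q.indicator (fun _ => a Q) x) ^ r) μ := by
  have hLp : MemLp (fun x => ∑ Q ∈ F, Q.indicator (fun _ => a Q) x) (ENNReal.ofReal r) μ :=
    memLp_finsetSum F fun Q hQ => memLp_indicator_const _ (hmeas Q hQ) _ (.inr (hfin Q hQ))
  have hint := hLp.integrable_norm_rpow (ENNReal.ofReal_pos.2 hr).ne' ENNReal.ofReal_ne_top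
  rw [ENNReal.toReal_ofReal hr.le] at hint
  have hnonneg (x : α) : 0 ≤ ∑ Q ∈ F, Q.indicator (fun _ => a Q) x :=
    Finset.sum_nonneg fun Q _ => indicator_nonneg (fun _ _ => ha Q) x
  simpa only [Real.norm_of_nonneg (hnonneg _)] using hint

variable {A K : ℝ} {𝒮 : Set (Set α)} {u v : Set α → ℝ}

lemma IsCarleson.integral_sum_indicator_mul_le (hcar : IsCarleson μ A 𝒮 v) (hA : 0 < A)
    (hpq : p.HolderConjugate q) (h𝒮 : IsLaminar 𝒮) (hmeas : ∀ Q ∈ 𝒮, MeasurableSet Q)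
    (hfin : ∀ Q ∈ 𝒮, μ Q ≠ ∞) (hu : ∀ Q, 0 ≤ u Q) (hv : ∀ Q, 0 ≤ v Q) (hK : 0 ≤ K)
    (hauv : ∀ Q ∈ 𝒮, a Q * μ.real Q ≤ K * (u Q ^ q⁻¹ * v Q ^ p⁻¹)) (hF : ∀ Q ∈ F, Q ∈ 𝒮)
    {g : α → ℝ} (hg : ∀ x, 0 ≤ g x) (hgi : ∀ Q ∈ F, IntegrableOn g Q μ)
    (hgp : Integrable (fun x => g x ^ p) μ) :
    ∫ x, (∑ Q ∈ F, Q.indicator (fun _ => a Q) x) * g x ∂μ ≤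
      K * ((∑ Q ∈ F, u Q) ^ q⁻¹ * (A * (2 ^ p / (p - 1)) * ∫ x, g x ^ p ∂μ) ^ p⁻¹) := by
  have hembedding :
      ∑ Q ∈ F, v Q * (⨍ x in Q, g x ∂μ) ^ p ≤ A * (2 ^ p / (p - 1)) * ∫ x, g x ^ p ∂μ := by
    simpa only [setIntegral_univ] using hcar.sum_mul_setAverage_rpow_le hA h𝒮 hmeas hv hpq.lt hg
      (fun Q hQ => ⟨hF Q hQ, subset_univ Q⟩) (fun Q hQ => hfin Q (hF Q hQ)) hgi hgp.integrableOn
  have havg (Q : Set α) : 0 ≤ ⨍ x in Q, g x ∂μ := integral_nonneg hg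
  have hpinv : 0 ≤ p⁻¹ := hpq.inv_nonneg
  calc ∫ x, (∑ Q ∈ F, Q.indicator (fun _ => a Q) x) * g x ∂μ
      = ∑ Q ∈ F, a Q * μ.real Q * ⨍ x in Q, g x ∂μ := by
        rw [integral_sum_indicator_mul (fun Q hQ => hmeas Q (hF Q hQ)) hgi]
        refine Finset.sum_congr rfl fun Q hQ => ?_
        rw [← measure_smul_setAverage _ (hfin Q (hF Q hQ)), smul_eq_mul, mul_assoc]
    _ ≤ ∑ Q ∈ F, K * (u Q ^ q⁻¹ * v Q ^ p⁻¹) * ⨍ x in Q, g x ∂μ :=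
        Finset.sum_le_sum fun Q hQ => mul_le_mul_of_nonneg_right (hauv Q (hF Q hQ)) (havg Q)
    _ = K * ∑ Q ∈ F, u Q ^ q⁻¹ * v Q ^ p⁻¹ * ⨍ x in Q, g x ∂μ := by
        simp only [Finset.mul_sum, mul_assoc]
    _ ≤ K * ((∑ Q ∈ F, u Q) ^ q⁻¹ * (∑ Q ∈ F, v Q * (⨍ x in Q, g x ∂μ) ^ p) ^ p⁻¹) := by
        gcongr
        exact sum_rpow_inv_mul_rpow_inv_mul_le hpq F (fun Q _ => hu Q) (fun Q _ => hv Q)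
          fun Q _ => havg Q
    _ ≤ K * ((∑ Q ∈ F, u Q) ^ q⁻¹ * (A * (2 ^ p / (p - 1)) * ∫ x, g x ^ p ∂μ) ^ p⁻¹) := by
        have hu_sum : 0 ≤ ∑ Q ∈ F, u Q := Finset.sum_nonneg fun Q _ => hu Q
        have hv_sum : 0 ≤ ∑ Q ∈ F, v Q * (⨍ x in Q, g x ∂μ) ^ p :=
          Finset.sum_nonneg fun Q _ => mul_nonneg (hv Q) (Real.rpow_nonneg (havg Q) p)
        gcongr

theorem IsCarleson.integral_sum_indicator_rpow_le (hcar : IsCarleson μ A 𝒮 v) (hA : 0 < A)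
    (hpq : p.HolderConjugate q) (h𝒮 : IsLaminar 𝒮) (hmeas : ∀ Q ∈ 𝒮, MeasurableSet Q)
    (hfin : ∀ Q ∈ 𝒮, μ Q ≠ ∞) (ha : ∀ Q, 0 ≤ a Q) (hu : ∀ Q, 0 ≤ u Q) (hv : ∀ Q, 0 ≤ v Q)
    (hK : 0 ≤ K) (hauv : ∀ Q ∈ 𝒮, a Q * μ.real Q ≤ K * (u Q ^ q⁻¹ * v Q ^ p⁻¹))
    (hF : ∀ Q ∈ F, Q ∈ 𝒮) :
    ∫ x, (∑ Q ∈ F, Q.indicator (fun _ => a Q) x) ^ q ∂μ ≤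
      (A * (2 ^ p / (p - 1))) ^ (q - 1) * K ^ q * ∑ Q ∈ F, u Q := by
  set T : α → ℝ := fun x => ∑ Q ∈ F, Q.indicator (fun _ => a Q) x
  have hT (x) : 0 ≤ T x := Finset.sum_nonneg fun Q _ => indicator_nonneg (fun _ _ => ha Q) x
  have hint {r : ℝ} (hr : 0 < r) : Integrable (fun x => T x ^ r) μ :=
    integrable_sum_indicator_rpow (fun Q hQ => hmeas Q (hF Q hQ)) (fun Q hQ => hfin Q (hF Q hQ))
      ha hr
  have hp := hpq.sub_one_pos
  have hq := hpq.symm.sub_one_pos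
  have hpow (x) : (T x ^ (q - 1)) ^ p = T x ^ q := by
    rw [← Real.rpow_mul (hT x), hpq.symm.sub_one_mul_conj]
  have hmul (x) : T x * T x ^ (q - 1) = T x ^ q := by
    rw [← Real.rpow_one_add' (hT x) (by linarith), add_sub_cancel]
  -- Duality: the pairing bound is tested on `g = T ^ (q - 1)`, whose `p`-th power is `T ^ q`.
  have hpairing := hcar.integral_sum_indicator_mul_le hA hpq h𝒮 hmeas hfin hu hv hK hauv hF
    (fun x => Real.rpow_nonneg (hT x) (q - 1)) (fun _ _ => (hint hq).integrableOn)
    (by simpa only [hpow] using hint hpq.symm.pos)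
  simp only [hpow] at hpairing
  refine le_of_le_mul_rpow_inv_mul_rpow_inv hpq (integral_nonneg fun x => Real.rpow_nonneg (hT x) q)
    hK (Finset.sum_nonneg fun Q _ => hu Q) (by positivity) ?_
  calc ∫ x, T x ^ q ∂μ = ∫ x, T x * T x ^ (q - 1) ∂μ := by simp only [hmul]
    _ ≤ K * ((∑ Q ∈ F, u Q) ^ q⁻¹ * (A * (2 ^ p / (p - 1)) * ∫ x, T x ^ q ∂μ) ^ p⁻¹) := hpairing

lemma lintegral_tsum_rpow_le {ι : Type*} [Countable ι] {f : ι → α → ℝ≥0∞}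
    (hf : ∀ i, Measurable (f i)) {r : ℝ} (hr : 0 < r) {B : ℝ≥0∞}
    (hB : ∀ s : Finset ι, ∫⁻ x, (∑ i ∈ s, f i x) ^ r ∂μ ≤ B) :
    ∫⁻ x, (∑' i, f i x) ^ r ∂μ ≤ B := by
  have hsup (x : α) : (∑' i, f i x) ^ r = ⨆ s : Finset ι, (∑ i ∈ s, f i x) ^ r := by
    rw [ENNReal.tsum_eq_iSup_sum]
    exact (ENNReal.orderIsoRpow r hr).map_iSup _
  simp only [hsup]
  rw [lintegral_iSup_directed]
  · exact iSup_le hB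
  · exact fun s => ((Finset.measurable_sum s fun i _ => hf i).pow_const r).aemeasurable
  · exact Monotone.directed_le fun s t hst x =>
      ENNReal.rpow_le_rpow (Finset.sum_le_sum_of_subset hst) hr.le

theorem IsCarleson.lintegral_tsum_indicator_rpow_le (hcar : IsCarleson μ A 𝒮 v) (hA : 0 < A)
    (hpq : p.HolderConjugate q) (h𝒮 : IsLaminar 𝒮) (hcount : 𝒮.Countable)
    (hmeas : ∀ Q ∈ 𝒮, MeasurableSet Q) (hfin : ∀ Q ∈ 𝒮, μ Q ≠ ∞) (ha : ∀ Q, 0 ≤ a Q)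
    (hu : ∀ Q, 0 ≤ u Q) (hv : ∀ Q, 0 ≤ v Q) (hK : 0 ≤ K)
    (hauv : ∀ Q ∈ 𝒮, a Q * μ.real Q ≤ K * (u Q ^ q⁻¹ * v Q ^ p⁻¹)) {M : ℝ}
    (hM : ∀ F : Finset (Set α), (∀ Q ∈ F, Q ∈ 𝒮) → ∑ Q ∈ F, u Q ≤ M) :
    ∫⁻ x, (∑' Q : 𝒮, Q.1.indicator (fun _ => ENNReal.ofReal (a Q)) x) ^ q ∂μ ≤
      ENNReal.ofReal ((A * (2 ^ p / (p - 1))) ^ (q - 1) * K ^ q * M) := by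
  have := hcount.to_subtype
  have hp := hpq.sub_one_pos
  have hq := hpq.symm.pos
  refine lintegral_tsum_rpow_le (ι := 𝒮) (fun Q => measurable_const.indicator (hmeas Q Q.2)) hq
    fun s => ?_
  set F : Finset (Set α) := s.map (Function.Embedding.subtype _)
  have hF (Q) (hQ : Q ∈ F) : Q ∈ 𝒮 := by
    obtain ⟨Q', -, rfl⟩ := Finset.mem_map.1 hQ
    exact Q'.2
  have hind (x : α) (Q : Set α) : 0 ≤ Q.indicator (fun _ => a Q) x :=
    indicator_nonneg (fun _ _ => ha Q) x
  have hT (x : α) : 0 ≤ ∑ Q ∈ F, Q.indicator (fun _ => a Q) x :=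
    Finset.sum_nonneg fun Q _ => hind x Q
  have hreal (x : α) : (∑ Q ∈ s, Q.1.indicator (fun _ => ENNReal.ofReal (a Q)) x) ^ q =
      ENNReal.ofReal ((∑ Q ∈ F, Q.indicator (fun _ => a Q) x) ^ q) := by
    rw [← ENNReal.ofReal_rpow_of_nonneg (hT x) hq.le,
      ENNReal.ofReal_sum_of_nonneg fun Q _ => hind x Q, Finset.sum_map]
    congr 1
    exact Finset.sum_congr rfl fun Q _ =>
      congrFun (indicator_comp_of_zero (g := ENNReal.ofReal) ENNReal.ofReal_zero) x
  simp only [hreal]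
  rw [← ofReal_integral_eq_lintegral_ofReal
    (integrable_sum_indicator_rpow (fun Q hQ => hmeas Q (hF Q hQ)) (fun Q hQ => hfin Q (hF Q hQ))
      ha hq) (ae_of_all _ fun x => Real.rpow_nonneg (hT x) q)]
  refine ENNReal.ofReal_le_ofReal ((hcar.integral_sum_indicator_rpow_le hA hpq h𝒮 hmeas hfin ha hu
    hv hK hauv hF).trans ?_)
  gcongr
  exact hM F hF

end Testing

section TwoWeight

variable {α : Type*} [MeasurableSpace α] {μ : Measure α} {A K p q : ℝ} {𝒮 : Set (Set α)}
  {w σ : α → ℝ}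

lemma withDensity_ofReal_apply {Q : Set α} (hQ : MeasurableSet Q) (hσ : ∀ x, 0 ≤ σ x)
    (hσi : IntegrableOn σ Q μ) :
    μ.withDensity (fun x => ENNReal.ofReal (σ x)) Q = ENNReal.ofReal (∫ x in Q, σ x ∂μ) := by
  rw [withDensity_apply _ hQ, ofReal_integral_eq_lintegral_ofReal hσi (ae_of_all _ hσ)]

lemma withDensity_ofReal_real_apply {Q : Set α} (hQ : MeasurableSet Q) (hσ : ∀ x, 0 ≤ σ x)
    (hσi : IntegrableOn σ Q μ) :
    (μ.withDensity fun x => ENNReal.ofReal (σ x)).real Q = ∫ x in Q, σ x ∂μ := by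
  rw [measureReal_def, withDensity_ofReal_apply hQ hσ hσi,
    ENNReal.toReal_ofReal (integral_nonneg hσ)]

lemma setLIntegral_mul_ofReal_le_lintegral_withDensity (hσ : AEMeasurable σ μ) (f : α → ℝ≥0∞)
    (R : Set α) :
    ∫⁻ x in R, f x * ENNReal.ofReal (σ x) ∂μ ≤
      ∫⁻ x, f x ∂μ.withDensity fun x => ENNReal.ofReal (σ x) := by
  rw [lintegral_withDensity_eq_lintegral_mul_non_measurable₀ _ hσ.ennreal_ofReal
    (ae_of_all _ fun _ => ENNReal.ofReal_lt_top)]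
  simpa only [Pi.mul_apply, mul_comm (ENNReal.ofReal _)] using setLIntegral_le_lintegral _ _

lemma IsCarleson.withDensity_geomMean (hcar : IsCarleson μ A 𝒮 μ.real) (hA : 0 < A)
    (h𝒮 : IsLaminar 𝒮) (hmeas : ∀ Q ∈ 𝒮, MeasurableSet Q) (hfin : ∀ Q ∈ 𝒮, μ Q ≠ ∞)
    (hσ : ∀ x, 0 < σ x) (hσi : ∀ Q ∈ 𝒮, IntegrableOn σ Q μ)
    (hlog : ∀ Q ∈ 𝒮, IntegrableOn (fun x => Real.log (σ x)) Q μ) :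
    IsCarleson (μ.withDensity fun x => ENNReal.ofReal (σ x)) (4 * A) 𝒮
      fun Q => μ.real Q * geomMean μ Q σ := by
  intro P hP F hF
  rw [withDensity_ofReal_real_apply (hmeas P hP) (fun x => (hσ x).le) (hσi P hP)]
  exact hcar.sum_measureReal_mul_geomMean_le hA h𝒮 hmeas hσ hF (fun Q hQ => hfin Q (hF Q hQ).1)
    (hσi P hP) fun Q hQ => hlog Q (hF Q hQ).1

lemma mul_rpow_inv_mul_mul_rpow_inv (hpq : p.HolderConjugate q) {a b c : ℝ} (hc : 0 ≤ c)
    (ha : 0 ≤ a) (hb : 0 ≤ b) :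
    (c * a) ^ q⁻¹ * (c * b) ^ p⁻¹ = c * (a ^ q⁻¹ * b ^ p⁻¹) := by
  have hinv : q⁻¹ + p⁻¹ = 1 := hpq.symm.inv_add_inv_eq_one
  have hsplit : c ^ q⁻¹ * c ^ p⁻¹ = c := by
    rw [← Real.rpow_add' hc (hinv ▸ one_ne_zero), hinv, Real.rpow_one]
  rw [Real.mul_rpow hc ha, Real.mul_rpow hc hb, mul_mul_mul_comm, hsplit]

theorem IsCarleson.lintegral_tsum_setAverage_rpow_le (hcar : IsCarleson μ A 𝒮 μ.real) (hA : 0 < A)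
    (hpq : p.HolderConjugate q) (h𝒮 : IsLaminar 𝒮) (hcount : 𝒮.Countable)
    (hmeas : ∀ Q ∈ 𝒮, MeasurableSet Q) (hfin : ∀ Q ∈ 𝒮, μ Q ≠ ∞) {R : Set α}
    (hR : ∀ Q ∈ 𝒮, Q ⊆ R) (hw : ∀ x, 0 < w x) (hwi : IntegrableOn w R μ)
    (hwlog : ∀ Q ∈ 𝒮, IntegrableOn (fun x => Real.log (w x)) Q μ) (hσ : ∀ x, 0 < σ x)
    (hσi : ∀ Q ∈ 𝒮, IntegrableOn σ Q μ)
    (hσlog : ∀ Q ∈ 𝒮, IntegrableOn (fun x => Real.log (σ x)) Q μ) (hK : 0 ≤ K)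
    (hmix : ∀ Q ∈ 𝒮, (⨍ x in Q, w x ∂μ) * (⨍ x in Q, σ x ∂μ) ≤
      K * (geomMean μ Q w ^ q⁻¹ * geomMean μ Q σ ^ p⁻¹)) :
    ∫⁻ x, (∑' Q : 𝒮, Q.1.indicator (fun _ => ENNReal.ofReal (⨍ y in Q.1, w y ∂μ)) x) ^ q
        ∂μ.withDensity (fun x => ENNReal.ofReal (σ x)) ≤
      ENNReal.ofReal
        ((4 * A * (2 ^ p / (p - 1))) ^ (q - 1) * K ^ q * (4 * A * ∫ x in R, w x ∂μ)) := by
  have hσ' (x) : 0 ≤ σ x := (hσ x).le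
  have havg (Q : Set α) : 0 ≤ ⨍ x in Q, w x ∂μ := integral_nonneg fun x => (hw x).le
  have hmass (f : α → ℝ) (Q : Set α) : 0 ≤ μ.real Q * geomMean μ Q f :=
    mul_nonneg measureReal_nonneg geomMean_pos.le
  refine (hcar.withDensity_geomMean hA h𝒮 hmeas hfin hσ hσi hσlog).lintegral_tsum_indicator_rpow_le
    (by positivity) hpq h𝒮 hcount hmeas (fun Q hQ => ?_) havg (hmass w) (hmass σ) hK
    (fun Q hQ => ?_) fun F hF => ?_
  · rw [withDensity_ofReal_apply (hmeas Q hQ) hσ' (hσi Q hQ)]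
    exact ENNReal.ofReal_ne_top
  · calc (⨍ x in Q, w x ∂μ) * (μ.withDensity fun x => ENNReal.ofReal (σ x)).real Q
        = μ.real Q * ((⨍ x in Q, w x ∂μ) * ⨍ x in Q, σ x ∂μ) := by
          rw [withDensity_ofReal_real_apply (hmeas Q hQ) hσ' (hσi Q hQ),
            ← measure_smul_setAverage _ (hfin Q hQ), smul_eq_mul, mul_left_comm]
      _ ≤ μ.real Q * (K * (geomMean μ Q w ^ q⁻¹ * geomMean μ Q σ ^ p⁻¹)) := by
          exact mul_le_mul_of_nonneg_left (hmix Q hQ) measureReal_nonneg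
      _ = K * ((μ.real Q * geomMean μ Q w) ^ q⁻¹ * (μ.real Q * geomMean μ Q σ) ^ p⁻¹) := by
          rw [mul_rpow_inv_mul_mul_rpow_inv hpq measureReal_nonneg geomMean_pos.le geomMean_pos.le,
            mul_left_comm]
  · exact hcar.sum_measureReal_mul_geomMean_le hA h𝒮 hmeas hw
      (fun Q hQ => ⟨hF Q hQ, hR Q (hF Q hQ)⟩) (fun Q hQ => hfin Q (hF Q hQ)) hwi
      fun Q hQ => hwlog Q (hF Q hQ)

end TwoWeight

section Cubes

variable {n : ℕ} {k : ℤ} {Q : Set (Fin n → ℝ)}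

lemma IsCube.isCompact (hQ : IsCube Q) : IsCompact Q := by
  obtain ⟨a, l, -, rfl⟩ := hQ
  exact isCompact_Icc

lemma IsCube.volume_ne_zero (hQ : IsCube Q) : volume Q ≠ 0 := by
  obtain ⟨a, l, hl, rfl⟩ := hQ
  simp [Real.volume_Icc_pi, hl]

lemma IsDyadicCubeOf.exists_isCube_ae_eq (hQ : IsDyadicCubeOf k Q) :
    ∃ P, IsCube P ∧ Q =ᵐ[volume] P := by
  obtain ⟨a, rfl⟩ := hQ
  exact ⟨_, ⟨a, 2 ^ k, by positivity, rfl⟩, Measure.univ_pi_Ico_ae_eq_Icc⟩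

lemma IsDyadicCubeOf.measurableSet (hQ : IsDyadicCubeOf k Q) : MeasurableSet Q := by
  obtain ⟨a, rfl⟩ := hQ
  exact MeasurableSet.univ_pi fun _ => measurableSet_Ico

lemma IsDyadicCubeOf.interior_nonempty (hQ : IsDyadicCubeOf k Q) : (interior Q).Nonempty := by
  obtain ⟨a, rfl⟩ := hQ
  have hside : (0 : ℝ) < 2 ^ k := by positivity
  simpa only [interior_pi_set finite_univ, univ_pi_nonempty_iff, interior_Ico, nonempty_Ioo,
    lt_add_iff_pos_right] using fun _ => hside

variable {𝒟 : Set (Set (Fin n → ℝ))}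

lemma IsDyadicGrid.countable (h𝒟 : IsDyadicGrid 𝒟) : 𝒟.Countable := by
  have hcover : 𝒟 ⊆ ⋃ k : ℤ, {Q | Q ∈ 𝒟 ∧ IsDyadicCubeOf k Q} := fun Q hQ =>
    mem_iUnion.2 ((h𝒟.1 Q hQ).imp fun _ hk => ⟨hQ, hk⟩)
  exact (countable_iUnion fun k => (h𝒟.2.2 k).2.countable_of_nonempty_interior
    fun Q hQ => hQ.2.interior_nonempty).mono hcover

lemma IsDyadicGrid.isLaminar (h𝒟 : IsDyadicGrid 𝒟) : IsLaminar 𝒟 := h𝒟.2.1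

lemma IsDyadicGrid.measurableSet (h𝒟 : IsDyadicGrid 𝒟) (hQ : Q ∈ 𝒟) : MeasurableSet Q :=
  (h𝒟.1 Q hQ).elim fun _ hk => hk.measurableSet

lemma IsDyadicGrid.exists_isCube_ae_eq (h𝒟 : IsDyadicGrid 𝒟) (hQ : Q ∈ 𝒟) :
    ∃ P, IsCube P ∧ Q =ᵐ[volume] P :=
  (h𝒟.1 Q hQ).elim fun _ hk => hk.exists_isCube_ae_eq

lemma IsDyadicGrid.volume_ne_top (h𝒟 : IsDyadicGrid 𝒟) (hQ : Q ∈ 𝒟) : volume Q ≠ ∞ := by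
  obtain ⟨P, hP, hQP⟩ := h𝒟.exists_isCube_ae_eq hQ
  exact measure_congr hQP ▸ hP.isCompact.measure_ne_top

lemma IsDyadicGrid.integrableOn (h𝒟 : IsDyadicGrid 𝒟) (hQ : Q ∈ 𝒟) {f : (Fin n → ℝ) → ℝ}
    (hf : LocallyIntegrable f) : IntegrableOn f Q := by
  obtain ⟨P, hP, hQP⟩ := h𝒟.exists_isCube_ae_eq hQ
  exact (hf.integrableOn_isCompact hP.isCompact).congr_set_ae hQP

variable {𝒮 : Set (Set (Fin n → ℝ))}

lemma pairwiseDisjoint_Eset (h𝒮 : IsLaminar 𝒮) : 𝒮.PairwiseDisjoint (Eset 𝒮) := by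
  have hsub {Q P : Set (Fin n → ℝ)} (hQ : Q ∈ 𝒮) (hne : Q ≠ P) (hQP : Q ⊆ P) :
      Disjoint (Eset 𝒮 Q) (Eset 𝒮 P) :=
    (disjoint_sdiff_right.mono_left
      (subset_biUnion_of_mem (u := id) (show Q ∈ {Q | Q ∈ 𝒮 ∧ Q ⊂ P} from
        ⟨hQ, hQP.ssubset_of_ne hne⟩))).mono_left sdiff_subset
  intro Q hQ P hP hne
  rcases h𝒮 Q hQ P hP with h | h | h
  exacts [hsub hQ hne h, (hsub hP hne.symm h).symm, h.mono sdiff_subset sdiff_subset]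

lemma measurableSet_strictUnion (hcount : 𝒮.Countable) (hmeas : ∀ Q ∈ 𝒮, MeasurableSet Q) :
    MeasurableSet (strictUnion 𝒮 Q) :=
  MeasurableSet.biUnion (hcount.mono fun _ h => h.1) fun P hP => hmeas P hP.1

lemma IsSparse.volume_real_le (h : IsSparse 𝒮) (hQ : Q ∈ 𝒮) (hfin : volume Q ≠ ∞) :
    volume.real Q ≤ 2 * volume.real (Eset 𝒮 Q) := by
  have hhalf : volume.real (strictUnion 𝒮 Q) ≤ volume.real Q / 2 := by
    simpa [measureReal_def] using
      ENNReal.toReal_mono (ENNReal.div_ne_top hfin two_ne_zero) (h Q hQ)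
  have hdiff : volume.real Q - volume.real (strictUnion 𝒮 Q) ≤ volume.real (Eset 𝒮 Q) :=
    le_measureReal_sdiff (measure_ne_top_of_subset (iUnion₂_subset fun _ hP => hP.2.subset) hfin)
  linarith

lemma IsSparse.isCarleson (h : IsSparse 𝒮) (h𝒮 : IsLaminar 𝒮) (hcount : 𝒮.Countable)
    (hmeas : ∀ Q ∈ 𝒮, MeasurableSet Q) (hfin : ∀ Q ∈ 𝒮, volume Q ≠ ∞) :
    IsCarleson volume 2 𝒮 volume.real :=
  isCarleson_of_pairwiseDisjoint hfin (pairwiseDisjoint_Eset h𝒮)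
    (fun Q hQ => (hmeas Q hQ).diff (measurableSet_strictUnion hcount hmeas))
    (fun _ _ => sdiff_subset) zero_le_two fun Q hQ => h.volume_real_le hQ (hfin Q hQ)

lemma IsDyadicGrid.isCarleson (h𝒟 : IsDyadicGrid 𝒟) (h𝒮𝒟 : 𝒮 ⊆ 𝒟) (h𝒮 : IsSparse 𝒮) :
    IsCarleson volume 2 𝒮 volume.real :=
  h𝒮.isCarleson (h𝒟.isLaminar.mono h𝒮𝒟) (h𝒟.countable.mono h𝒮𝒟)
    (fun _ hQ => h𝒟.measurableSet (h𝒮𝒟 hQ)) fun _ hQ => h𝒟.volume_ne_top (h𝒮𝒟 hQ)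

end Cubes

section MixedConstant

variable {n : ℕ} {p : ℝ} {w : (Fin n → ℝ) → ℝ} {Q : Set (Fin n → ℝ)}

lemma avg_eq_setAverage (Q : Set (Fin n → ℝ)) (f : (Fin n → ℝ) → ℝ) :
    avg Q f = ⨍ x in Q, f x := (setAverage_eq _ _ _).symm

lemma ApQ_eq : ApQ p w Q =
    (⨍ x in Q, w x) * (⨍ x in Q, w x ^ (-(1 / (p - 1)))) ^ (p - 1) := by
  simp only [ApQ, avg_eq_setAverage]

lemma AexpQ_eq_div : AexpQ w Q = (⨍ x in Q, w x) / geomMean volume Q w := by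
  rw [AexpQ, avg_eq_setAverage, avg_eq_setAverage, Real.exp_neg, geomMean, div_eq_mul_inv]

lemma ApQ_nonneg (hw : ∀ x, 0 < w x) : 0 ≤ ApQ p w Q := by
  have havg : 0 ≤ ⨍ x in Q, w x := integral_nonneg fun x => (hw x).le
  have hdual : 0 ≤ ⨍ x in Q, w x ^ (-(1 / (p - 1))) :=
    integral_nonneg fun x => Real.rpow_nonneg (hw x).le _
  rw [ApQ_eq]
  positivity

lemma one_le_AexpQ (hw : ∀ x, 0 < w x) (h0 : volume Q ≠ 0) (h1 : volume Q ≠ ∞)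
    (hwi : IntegrableOn w Q) (hlog : IntegrableOn (fun x => Real.log (w x)) Q) :
    1 ≤ AexpQ w Q := by
  rw [AexpQ_eq_div, one_le_div geomMean_pos]
  exact geomMean_le_setAverage hw h0 h1 hwi hlog

lemma AexpQ_le_ApQ (hp : 1 < p) (hw : ∀ x, 0 < w x) (h0 : volume Q ≠ 0) (h1 : volume Q ≠ ∞)
    (hσi : IntegrableOn (fun x => w x ^ (-(1 / (p - 1)))) Q)
    (hlog : IntegrableOn (fun x => Real.log (w x)) Q) : AexpQ w Q ≤ ApQ p w Q := by
  have hp' : 0 < p - 1 := sub_pos.2 hp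
  have hσlog : IntegrableOn (fun x => Real.log (w x ^ (-(1 / (p - 1))))) Q := by
    simp only [Real.log_rpow (hw _)]
    exact hlog.const_mul _
  have hinv : (geomMean volume Q w)⁻¹ =
      geomMean volume Q (fun x => w x ^ (-(1 / (p - 1)))) ^ (p - 1) := by
    rw [geomMean_rpow hw, ← Real.rpow_mul geomMean_pos.le, neg_mul, one_div_mul_cancel hp'.ne',
      Real.rpow_neg_one]
  have havg : 0 ≤ ⨍ x in Q, w x := integral_nonneg fun x => (hw x).le
  rw [AexpQ_eq_div, ApQ_eq, div_eq_mul_inv, hinv]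
  gcongr
  · exact geomMean_pos.le
  · exact geomMean_le_setAverage (fun x => Real.rpow_pos_of_pos (hw x) _) h0 h1 hσi hσlog

/-- The value `A_p(w,Q)^{1/(p-1)} A_∞^exp(w,Q)^{1-1/(p-1)}` at `Q` of the mixed `A_p`-`A_∞`
quantity. -/
def mixedQ (p : ℝ) (w : (Fin n → ℝ) → ℝ) (Q : Set (Fin n → ℝ)) : ℝ :=
  ApQ p w Q ^ (1 / (p - 1)) * AexpQ w Q ^ (1 - 1 / (p - 1))

lemma mixedQ_nonneg (hw : ∀ x, 0 < w x) : 0 ≤ mixedQ p w Q := by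
  have hAp : 0 ≤ ApQ p w Q := ApQ_nonneg hw
  have hAexp : 0 ≤ AexpQ w Q :=
    AexpQ_eq_div ▸ div_nonneg (integral_nonneg fun x => (hw x).le) geomMean_pos.le
  unfold mixedQ
  positivity

lemma rpow_mul_rpow_one_sub_le_max {a b c r : ℝ} (hb : 1 ≤ b) (hba : b ≤ a) (hac : a ≤ c)
    (hr : 0 ≤ r) : a ^ r * b ^ (1 - r) ≤ max c (c ^ r) := by
  have ha : 0 < a := by linarith
  rcases le_total r 1 with hr1 | hr1
  · have : 0 ≤ 1 - r := sub_nonneg.2 hr1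
    calc a ^ r * b ^ (1 - r) ≤ a ^ r * a ^ (1 - r) := by gcongr
      _ = a := by rw [← Real.rpow_add ha, add_sub_cancel, Real.rpow_one]
      _ ≤ max c (c ^ r) := hac.trans (le_max_left _ _)
  · calc a ^ r * b ^ (1 - r) ≤ a ^ r * 1 := by
          gcongr
          exact Real.rpow_le_one_of_one_le_of_nonpos hb (by linarith)
      _ ≤ c ^ r := by
          rw [mul_one]
          exact Real.rpow_le_rpow ha.le hac hr
      _ ≤ max c (c ^ r) := le_max_right _ _

lemma mixedQ_le_max (hp : 1 < p) (hw : ∀ x, 0 < w x) (h0 : volume Q ≠ 0) (h1 : volume Q ≠ ∞)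
    (hwi : IntegrableOn w Q) (hσi : IntegrableOn (fun x => w x ^ (-(1 / (p - 1)))) Q) {B : ℝ}
    (hB : ApQ p w Q ≤ B) : mixedQ p w Q ≤ max B (B ^ (1 / (p - 1))) := by
  have hr : 0 < 1 / (p - 1) := one_div_pos.2 (sub_pos.2 hp)
  have hlog := integrableOn_log_of_integrableOn_rpow_neg hw hr hwi hσi
  exact rpow_mul_rpow_one_sub_le_max (one_le_AexpQ hw h0 h1 hwi hlog)
    (AexpQ_le_ApQ hp hw h0 h1 hσi hlog) hB hr.le

lemma setAverage_mul_setAverage_eq (hp : 1 < p) (hw : ∀ x, 0 < w x)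
    (h0 : volume Q ≠ 0) (h1 : volume Q ≠ ∞) (hwi : IntegrableOn w Q)
    (hlog : IntegrableOn (fun x => Real.log (w x)) Q) :
    (⨍ x in Q, w x) * (⨍ x in Q, w x ^ (-(1 / (p - 1)))) =
      mixedQ p w Q * (geomMean volume Q w ^ (p / (p - 1))⁻¹ *
        geomMean volume Q (fun x => w x ^ (-(1 / (p - 1)))) ^ p⁻¹) := by
  have hp' : 0 < p - 1 := sub_pos.2 hp
  have hG : 0 < geomMean volume Q w := geomMean_pos
  have hW : 0 < ⨍ x in Q, w x := hG.trans_le (geomMean_le_setAverage hw h0 h1 hwi hlog)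
  have hS : 0 ≤ ⨍ x in Q, w x ^ (-(1 / (p - 1))) :=
    integral_nonneg fun x => Real.rpow_nonneg (hw x).le _
  rw [mixedQ, ApQ_eq, AexpQ_eq_div, geomMean_rpow hw]
  generalize geomMean volume Q w = G at *
  generalize (⨍ x in Q, w x) = W at *
  generalize (⨍ x in Q, w x ^ (-(1 / (p - 1)))) = S at *
  have hWpow : W ^ (1 / (p - 1)) * W ^ (1 - 1 / (p - 1)) = W := by
    rw [← Real.rpow_add hW, add_sub_cancel, Real.rpow_one]
  have hSpow : (S ^ (p - 1)) ^ (1 / (p - 1)) = S := by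
    rw [one_div, Real.rpow_rpow_inv hS hp'.ne']
  have hGpow : G ^ (p / (p - 1))⁻¹ * (G ^ (-(1 / (p - 1)))) ^ p⁻¹ = G ^ (1 - 1 / (p - 1)) := by
    rw [← Real.rpow_mul hG.le, ← Real.rpow_add hG]
    congr 1
    field_simp
    ring
  rw [Real.mul_rpow hW.le (by positivity), Real.div_rpow hW.le hG.le, hSpow, hGpow]
  calc W * S = W ^ (1 / (p - 1)) * W ^ (1 - 1 / (p - 1)) * S := by rw [hWpow]
    _ = W ^ (1 / (p - 1)) * S * (W ^ (1 - 1 / (p - 1)) / G ^ (1 - 1 / (p - 1))) *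
          G ^ (1 - 1 / (p - 1)) := by field_simp

/-- The mixed constant `[w]_{(A_p)^{1/(p-1)}(A_∞^exp)^{1-1/(p-1)}}`, a supremum over closed cubes.
As a supremum of reals it is `0` when the family is unbounded. -/
def mixedConst (p : ℝ) (w : (Fin n → ℝ) → ℝ) : ℝ :=
  ⨆ Q : {Q : Set (Fin n → ℝ) // IsCube Q}, mixedQ p w Q.1

lemma mixedConst_nonneg (hw : ∀ x, 0 < w x) : 0 ≤ mixedConst p w :=
  Real.iSup_nonneg fun _ => mixedQ_nonneg hw

lemma mixedQ_le_mixedConst (hp : 1 < p) (hw : ∀ x, 0 < w x) (hwl : LocallyIntegrable w)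
    (hσl : LocallyIntegrable fun x => w x ^ (-(1 / (p - 1))))
    (hAp : BddAbove (range fun Q : {Q : Set (Fin n → ℝ) // IsCube Q} => ApQ p w Q.1))
    (hQ : IsCube Q) : mixedQ p w Q ≤ mixedConst p w := by
  obtain ⟨B, hB⟩ := hAp
  refine le_ciSup (f := fun Q : {Q : Set (Fin n → ℝ) // IsCube Q} => mixedQ p w Q.1)
    ⟨max B (B ^ (1 / (p - 1))), ?_⟩ ⟨Q, hQ⟩
  rintro _ ⟨P, rfl⟩
  exact mixedQ_le_max hp hw P.2.volume_ne_zero P.2.isCompact.measure_ne_top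
    (hwl.integrableOn_isCompact P.2.isCompact) (hσl.integrableOn_isCompact P.2.isCompact)
    (hB ⟨P, rfl⟩)

lemma setAverage_mul_setAverage_le (hp : 1 < p) (hw : ∀ x, 0 < w x) (hwl : LocallyIntegrable w)
    (hσl : LocallyIntegrable fun x => w x ^ (-(1 / (p - 1))))
    (hAp : BddAbove (range fun Q : {Q : Set (Fin n → ℝ) // IsCube Q} => ApQ p w Q.1))
    {P : Set (Fin n → ℝ)} (hP : IsCube P) (hQP : Q =ᵐ[volume] P) :
    (⨍ x in Q, w x) * (⨍ x in Q, w x ^ (-(1 / (p - 1)))) ≤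
      mixedConst p w * (geomMean volume Q w ^ (p / (p - 1))⁻¹ *
        geomMean volume Q (fun x => w x ^ (-(1 / (p - 1)))) ^ p⁻¹) := by
  simp only [geomMean, setAverage_congr hQP]
  have hwi := hwl.integrableOn_isCompact hP.isCompact
  have hσi := hσl.integrableOn_isCompact hP.isCompact
  have hlog := integrableOn_log_of_integrableOn_rpow_neg hw (one_div_pos.2 (sub_pos.2 hp)) hwi hσi
  rw [setAverage_mul_setAverage_eq hp hw hP.volume_ne_zero hP.isCompact.measure_ne_top hwi hlog]
  exact mul_le_mul_of_nonneg_right (mixedQ_le_mixedConst hp hw hwl hσl hAp hP)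
    (mul_nonneg (Real.rpow_nonneg geomMean_pos.le _) (Real.rpow_nonneg geomMean_pos.le _))

theorem IsCarleson.lintegral_sparseT_rpow_le {A : ℝ} {𝒟 𝒮 : Set (Set (Fin n → ℝ))}
    (hcar : IsCarleson volume A 𝒮 volume.real) (hA : 0 < A) (h𝒟 : IsDyadicGrid 𝒟) (h𝒮𝒟 : 𝒮 ⊆ 𝒟)
    (hp : 1 < p) (hw : ∀ x, 0 < w x) (hwl : LocallyIntegrable w)
    (hσl : LocallyIntegrable fun x => w x ^ (-(1 / (p - 1))))
    (hAp : BddAbove (range fun Q : {Q : Set (Fin n → ℝ) // IsCube Q} => ApQ p w Q.1))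
    {R : Set (Fin n → ℝ)} (hR : ∀ Q ∈ 𝒮, Q ⊆ R) (hwR : IntegrableOn w R) :
    ∫⁻ x, sparseT 𝒮 w x ^ (p / (p - 1))
        ∂volume.withDensity (fun x => ENNReal.ofReal (w x ^ (-(1 / (p - 1))))) ≤
      ENNReal.ofReal ((4 * A * (2 ^ p / (p - 1))) ^ (p / (p - 1) - 1) *
        mixedConst p w ^ (p / (p - 1)) * (4 * A * ∫ x in R, w x)) := by
  have hlog (Q) (hQ : Q ∈ 𝒮) : IntegrableOn (fun x => Real.log (w x)) Q :=
    integrableOn_log_of_integrableOn_rpow_neg hw (one_div_pos.2 (sub_pos.2 hp))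
      (h𝒟.integrableOn (h𝒮𝒟 hQ) hwl) (h𝒟.integrableOn (h𝒮𝒟 hQ) hσl)
  simp only [sparseT, avg_eq_setAverage]
  refine hcar.lintegral_tsum_setAverage_rpow_le hA (Real.HolderConjugate.conjExponent hp)
    (h𝒟.isLaminar.mono h𝒮𝒟) (h𝒟.countable.mono h𝒮𝒟) (fun Q hQ => h𝒟.measurableSet (h𝒮𝒟 hQ))
    (fun Q hQ => h𝒟.volume_ne_top (h𝒮𝒟 hQ)) hR hw hwR hlog
    (fun x => Real.rpow_pos_of_pos (hw x) _) (fun Q hQ => h𝒟.integrableOn (h𝒮𝒟 hQ) hσl)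
    (fun Q hQ => ?_) (mixedConst_nonneg hw) fun Q hQ => ?_
  · simp only [Real.log_rpow (hw _)]
    exact (hlog Q hQ).const_mul _
  · obtain ⟨P, hP, hQP⟩ := h𝒟.exists_isCube_ae_eq (h𝒮𝒟 hQ)
    exact setAverage_mul_setAverage_le hp hw hwl hσl hAp hP hQP

end MixedConstant

theorem stmt10_general (p : ℝ) (hp : 1 < p) :
    ∃ C > (0 : ℝ), ∀ (n : ℕ) (𝒟 𝒮 : Set (Set (Fin n → ℝ))),
      IsDyadicGrid 𝒟 → 𝒮 ⊆ 𝒟 → IsSparse 𝒮 →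
      ∀ (w σ : (Fin n → ℝ) → ℝ), (∀ x, 0 < w x) →
      σ = (fun x => w x ^ (-(1 / (p - 1)))) →
      LocallyIntegrable w volume → LocallyIntegrable σ volume →
      BddAbove (Set.range fun Q : {Q : Set (Fin n → ℝ) // IsCube Q} => ApQ p w Q.1) →
      ∀ R : Set (Fin n → ℝ), IntegrableOn w R →
      ∫⁻ x in R, sparseT {Q | Q ∈ 𝒮 ∧ Q ⊆ R} w x ^ (p / (p - 1)) * ENNReal.ofReal (σ x) ≤
        ENNReal.ofReal (C * mixedConst p w ^ (p / (p - 1)) * ∫ x in R, w x) := by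
  have := sub_pos.2 hp
  refine ⟨(4 * 2 * (2 ^ p / (p - 1))) ^ (p / (p - 1) - 1) * (4 * 2), by positivity, ?_⟩
  rintro n 𝒟 𝒮 h𝒟 h𝒮𝒟 h𝒮 w σ hw rfl hwl hσl hAp R hwR
  set 𝒯 : Set (Set (Fin n → ℝ)) := {Q | Q ∈ 𝒮 ∧ Q ⊆ R}
  have h𝒯𝒮 : 𝒯 ⊆ 𝒮 := fun Q hQ => hQ.1
  calc ∫⁻ x in R, sparseT 𝒯 w x ^ (p / (p - 1)) * ENNReal.ofReal (w x ^ (-(1 / (p - 1))))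
      ≤ ∫⁻ x, sparseT 𝒯 w x ^ (p / (p - 1))
          ∂volume.withDensity (fun x => ENNReal.ofReal (w x ^ (-(1 / (p - 1))))) :=
        setLIntegral_mul_ofReal_le_lintegral_withDensity hσl.aestronglyMeasurable.aemeasurable _ R
    _ ≤ ENNReal.ofReal ((4 * 2 * (2 ^ p / (p - 1))) ^ (p / (p - 1) - 1) *
          mixedConst p w ^ (p / (p - 1)) * (4 * 2 * ∫ x in R, w x)) :=
        ((h𝒟.isCarleson h𝒮𝒟 h𝒮).mono h𝒯𝒮).lintegral_sparseT_rpow_le two_pos h𝒟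
          (h𝒯𝒮.trans h𝒮𝒟) hp hw hwl hσl hAp (fun Q hQ => hQ.2) hwR
    _ = ENNReal.ofReal ((4 * 2 * (2 ^ p / (p - 1))) ^ (p / (p - 1) - 1) * (4 * 2) *
          mixedConst p w ^ (p / (p - 1)) * ∫ x in R, w x) := by ring_nf

/-- Theorem (testing bound, one-supremum exponential mixed constant):
for `w ∈ A_p`, `σ = w^{1-p'}`, and a sparse family `𝒮` of dyadic cubes,
`∫_R (T^{𝒮(R)} w)^{p'} σ ≲ [w]_{(A_p)^{1/(p-1)}(A_∞^exp)^{1-1/(p-1)}}^{p'} w(R)`,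
with implicit constant depending only on `p` and the dimension. -/
theorem stmt10 (p : ℝ) (hp : 1 < p) (n : ℕ) :
    ∃ C > (0 : ℝ), ∀ (𝒟 𝒮 : Set (Set (Fin n → ℝ))),
      IsDyadicGrid 𝒟 → 𝒮 ⊆ 𝒟 → IsSparse 𝒮 →
      ∀ (w σ : (Fin n → ℝ) → ℝ), (∀ x, 0 < w x) →
      σ = (fun x => w x ^ (-(1 / (p - 1)))) →
      LocallyIntegrable w volume → LocallyIntegrable σ volume →
      LocallyIntegrable (fun x => Real.log (w x)) volume →
      BddAbove (Set.range fun Q : {Q : Set (Fin n → ℝ) // IsCube Q} => ApQ p w Q.1) →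
      ∀ R : Set (Fin n → ℝ), IsCube R →
      ∫⁻ x in R, sparseT {Q | Q ∈ 𝒮 ∧ Q ⊆ R} w x ^ (p / (p - 1)) *
          ENNReal.ofReal (σ x) ≤
        ENNReal.ofReal (C *
          (⨆ Q : {Q : Set (Fin n → ℝ) // IsCube Q},
            ApQ p w Q.1 ^ (1 / (p - 1)) * AexpQ w Q.1 ^ (1 - 1 / (p - 1))) ^ (p / (p - 1)) *
          ∫ x in R, w x) := by
  obtain ⟨C, hC, h⟩ := stmt10_general p hp
  exact ⟨C, hC, fun 𝒟 𝒮 h𝒟 h𝒮𝒟 h𝒮 w σ hw hσ hwl hσl _ hAp R hR =>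
    h n 𝒟 𝒮 h𝒟 h𝒮𝒟 h𝒮 w σ hw hσ hwl hσl hAp R (hwl.integrableOn_isCompact hR.isCompact)⟩
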